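/- arXiv:2205.09941 — 3 statements merged into one kernel-verified Lean document; each statement's English description precedes it below -/
import Mathlib

section
/- In a length space X, for any two distinct points x and y, the distance d(x,y) equals the infimum of lengths of rectifiable arcs with endpoints x and y. -/
open Set Metric
open scoped ENNReal

/-- A curve from `x` to `y` parameterized on `[0,1]`. -/
def IsCurveOn {X : Type*} [PseudoEMetricSpace X] (γ : ℝ → X) (x y : X) : Prop :=
  ContinuousOn γ (Set.Icc 0 1) ∧ γ 0 = x ∧ γ 1 = y

/-- The set of lengths of curves from `x` to `y`. -/
def curveLengths {X : Type*} [PseudoEMetricSpace X] (x y : X) : Set ℝ≥0∞ :=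
  {ℓ | ∃ γ : ℝ → X, IsCurveOn γ x y ∧ eVariationOn γ (Set.Icc 0 1) = ℓ}

/-- `X` is a length space if the distance between any two points equals the infimum
of lengths of curves connecting them. -/
def IsLengthSpace (X : Type*) [PseudoEMetricSpace X] : Prop :=
  ∀ x y : X, edist x y = sInf (curveLengths x y)

/-!
Among all 1-Lipschitz paths from `x` to `y` inside the compact image of a rectifiable curve, one has
the smallest travel time `ℓ`, by Tychonoff's theorem. It is injective on `[0, ℓ]`: a loop could be
excised, which keeps the path 1-Lipschitz and shortens the travel time. Parameterizing the given
curve by arc length shows that `ℓ` is at most its length, so every rectifiable curve can be replaced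
by an arc that is no longer.
-/

open Filter Topology
open scoped NNReal

section Variation

variable {E : Type*} [PseudoEMetricSpace E]

lemma lipschitzOnWith_of_hasConstantSpeedOnWith {f : ℝ → E} {s : Set ℝ} {C : ℝ≥0}
    (hf : HasConstantSpeedOnWith f s C) : LipschitzOnWith C f s := by
  intro a ha b hb
  wlog hab : a ≤ b generalizing a b
  · rw [edist_comm, edist_comm a]
    exact this hb ha (le_of_not_ge hab)
  calc edist (f a) (f b) ≤ eVariationOn f (s ∩ Icc a b) :=
        eVariationOn.edist_le f ⟨ha, left_mem_Icc.2 hab⟩ ⟨hb, right_mem_Icc.2 hab⟩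
    _ = ENNReal.ofReal (C * (b - a)) := hf ha hb
    _ = C * edist a b := by
        rw [ENNReal.ofReal_mul C.coe_nonneg, ENNReal.ofReal_coe_nnreal, edist_comm, edist_dist,
          Real.dist_eq, abs_of_nonneg (sub_nonneg.2 hab)]

lemma eVariationOn_Icc_le_of_lipschitzOnWith {f : ℝ → E} {a b : ℝ} {C : ℝ≥0}
    (hf : LipschitzOnWith C f (Icc a b)) :
    eVariationOn f (Icc a b) ≤ C * ENNReal.ofReal (b - a) :=
  (hf.comp_eVariationOn_le (mapsTo_id _)).trans_eq (by rw [eVariationOn_id_Icc])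

lemma continuousOn_variationOnFromTo {α : Type*} [LinearOrder α] [TopologicalSpace α]
    [OrderTopology α] {f : α → E} {s : Set α} {a : α} (hf : BoundedVariationOn f s)
    (hc : ContinuousOn f s) (ha : a ∈ s) : ContinuousOn (variationOnFromTo f s a) s := by
  intro b hb
  have hleft : Tendsto (fun c => eVariationOn f (s ∩ Icc c b)) (𝓝[s] b) (𝓝 0) :=
    hf.tendsto_eVariationOn_Icc_zero_left ((hc b hb).mono inter_subset_left)
  have hright : Tendsto (fun c => eVariationOn f (s ∩ Icc b c)) (𝓝[s] b) (𝓝 0) :=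
    hf.tendsto_eVariationOn_Icc_zero_right b ((hc b hb).mono inter_subset_left)
  have hsum := hleft.add hright
  rw [add_zero] at hsum
  refine tendsto_iff_edist_tendsto_0.2 (tendsto_of_tendsto_of_tendsto_of_le_of_le'
    tendsto_const_nhds hsum (.of_forall fun _ => zero_le) ?_)
  filter_upwards [self_mem_nhdsWithin] with c hcs
  have hl := hf.locallyBoundedVariationOn
  rw [edist_dist, Real.dist_eq, variationOnFromTo.sub_right hl ha hcs hb]
  rcases le_total b c with hbc | hcb
  · rw [variationOnFromTo.eq_of_le f s hbc, ENNReal.abs_toReal,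
      ENNReal.ofReal_toReal (hl b c hb hcs)]
    exact le_add_self
  · rw [variationOnFromTo.eq_of_ge f s hcb, abs_neg, ENNReal.abs_toReal,
      ENNReal.ofReal_toReal (hl c b hcs hb)]
    exact le_self_add

lemma surjOn_variationOnFromTo_Icc {α : Type*} [ConditionallyCompleteLinearOrder α]
    [TopologicalSpace α] [OrderTopology α] [DenselyOrdered α] {f : α → E} {a b : α} (hab : a ≤ b)
    (hf : BoundedVariationOn f (Icc a b)) (hc : ContinuousOn f (Icc a b)) :
    SurjOn (variationOnFromTo f (Icc a b) a) (Icc a b)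
      (Icc 0 (eVariationOn f (Icc a b)).toReal) := by
  have hivt := intermediate_value_Icc hab
    (continuousOn_variationOnFromTo hf hc (left_mem_Icc.2 hab))
  rwa [variationOnFromTo.self, variationOnFromTo.eq_of_le f _ hab, inter_self] at hivt

end Variation

lemma isClosed_setOf_lipschitzWith_and_apply_eq {α E : Type*} [PseudoEMetricSpace α]
    [EMetricSpace E] (C : ℝ≥0) (y : E) :
    IsClosed {p : α × (α → E) | LipschitzWith C p.2 ∧ p.2 p.1 = y} := by
  -- Evaluation is not jointly continuous for pointwise convergence, but for a Lipschitz function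
  -- its value at a point is pinned down by conditions on its values at all fixed points.
  have hiff : ∀ p : α × (α → E), LipschitzWith C p.2 →
      (p.2 p.1 = y ↔ ∀ u, edist (p.2 u) y ≤ C * edist u p.1) := by
    refine fun p hp => ⟨fun hy u => hy ▸ hp u p.1, fun hy => ?_⟩
    simpa only [edist_self, mul_zero, nonpos_iff_eq_zero, edist_eq_zero] using hy p.1
  have hset : {p : α × (α → E) | LipschitzWith C p.2 ∧ p.2 p.1 = y} =
      {p | LipschitzWith C p.2} ∩ ⋂ u, {p | edist (p.2 u) y ≤ C * edist u p.1} := by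
    ext p
    rw [mem_inter_iff, mem_iInter]
    exact and_congr_right (hiff p)
  rw [hset]
  refine ((isClosed_setOfPred_lipschitzWith C).preimage continuous_snd).inter
    (isClosed_iInter fun u => isClosed_le ?_ ?_)
  · exact ((continuous_apply u).comp continuous_snd).edist continuous_const
  · exact (ENNReal.continuous_const_mul ENNReal.coe_ne_top).comp
      (continuous_const.edist continuous_fst)

lemma lipschitzWith_of_lipschitzOnWith_Iic_Ici {E : Type*} [PseudoEMetricSpace E] {C : ℝ≥0}
    {f : ℝ → E} {s : ℝ} (hIic : LipschitzOnWith C f (Iic s)) (hIci : LipschitzOnWith C f (Ici s)) :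
    LipschitzWith C f := by
  intro u v
  wlog huv : u ≤ v generalizing u v
  · rw [edist_comm, edist_comm u]
    exact this v u (le_of_not_ge huv)
  rcases le_total v s with hvs | hsv
  · exact hIic (huv.trans hvs) hvs
  rcases le_total s u with hsu | hus
  · exact hIci hsu hsv
  calc edist (f u) (f v) ≤ edist (f u) (f s) + edist (f s) (f v) := edist_triangle _ _ _
    _ ≤ C * edist u s + C * edist s v :=
        add_le_add (hIic hus self_mem_Iic) (hIci self_mem_Ici hsv)
    _ = C * edist u v := by
        rw [← mul_add, edist_dist u s, edist_dist s v, edist_dist u v,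
          ← ENNReal.ofReal_add dist_nonneg dist_nonneg,
          dist_add_dist_of_mem_segment (segment_eq_Icc huv ▸ ⟨hus, hsv⟩)]

section Excise

variable {E : Type*} {h : ℝ → E} {s t u : ℝ}

/-- The path `h` with its portion between the times `s` and `t` removed: what comes after `t` is
moved forward to start at time `s`. -/
noncomputable def excise (h : ℝ → E) (s t u : ℝ) : E :=
  if u ≤ s then h u else h (u + (t - s))

lemma excise_of_le (hu : u ≤ s) : excise h s t u = h u :=
  if_pos hu

lemma excise_of_ge (hst : h s = h t) (hu : s ≤ u) : excise h s t u = h (u + (t - s)) := by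
  rcases hu.eq_or_lt with rfl | hu
  · rw [excise_of_le le_rfl, hst, add_sub_cancel]
  · exact if_neg hu.not_ge

lemma lipschitzWith_excise [PseudoEMetricSpace E] {C : ℝ≥0} (hh : LipschitzWith C h)
    (hst : h s = h t) : LipschitzWith C (excise h s t) := by
  refine lipschitzWith_of_lipschitzOnWith_Iic_Ici (s := s) (fun u hu v hv => ?_)
    fun u hu v hv => ?_
  · rw [excise_of_le hu, excise_of_le hv]
    exact hh u v
  · rw [excise_of_ge hst hu, excise_of_ge hst hv, ← edist_add_right u v (t - s)]
    exact hh _ _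

end Excise

/-- `h` is a 1-Lipschitz path in `K` which travels from `x` to `y` in time `ℓ`. It is defined on all
of `ℝ`, so that paths with different travel times live in one space, that of functions `ℝ → X` with
pointwise convergence. -/
structure IsLipschitzPath {X : Type*} [PseudoEMetricSpace X] (K : Set X) (x y : X) (ℓ : ℝ)
    (h : ℝ → X) : Prop where
  time_nonneg : 0 ≤ ℓ
  lipschitzWith : LipschitzWith 1 h
  mem : ∀ u, h u ∈ K
  map_zero : h 0 = x
  map_time : h ℓ = y

namespace IsLipschitzPath

section PseudoEMetricSpace

variable {X : Type*} [PseudoEMetricSpace X] {K : Set X} {x y : X} {ℓ : ℝ} {h : ℝ → X}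

lemma excise_of_eq (hh : IsLipschitzPath K x y ℓ h) {s t : ℝ} (hs : 0 ≤ s) (ht : t ≤ ℓ)
    (hst : h s = h t) : IsLipschitzPath K x y (ℓ - (t - s)) (excise h s t) where
  time_nonneg := by linarith
  lipschitzWith := lipschitzWith_excise hh.lipschitzWith hst
  mem u := by
    unfold excise
    split_ifs
    exacts [hh.mem _, hh.mem _]
  map_zero := by rw [excise_of_le hs, hh.map_zero]
  map_time := by rw [excise_of_ge hst (by linarith), sub_add_cancel, hh.map_time]

lemma injOn_of_forall_le (hh : IsLipschitzPath K x y ℓ h)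
    (hmin : ∀ ℓ' h', IsLipschitzPath K x y ℓ' h' → ℓ ≤ ℓ') : InjOn h (Icc 0 ℓ) := by
  intro s hs t ht hst
  wlog hle : s ≤ t generalizing s t
  · exact (this ht hs hst.symm (le_of_not_ge hle)).symm
  have hshort : ℓ ≤ ℓ - (t - s) := hmin _ _ (hh.excise_of_eq hs.1 ht.2 hst)
  linarith

lemma isCurveOn_comp_mul (hh : IsLipschitzPath K x y ℓ h) : IsCurveOn (h ∘ (ℓ * ·)) x y :=
  ⟨(hh.lipschitzWith.continuous.comp (continuous_const_mul ℓ)).continuousOn,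
    (congrArg h (mul_zero ℓ)).trans hh.map_zero, (congrArg h (mul_one ℓ)).trans hh.map_time⟩

lemma mapsTo_mul_Icc (hh : IsLipschitzPath K x y ℓ h) : MapsTo (ℓ * ·) (Icc 0 1) (Icc 0 ℓ) :=
  fun _ hu => ⟨mul_nonneg hh.time_nonneg hu.1, mul_le_of_le_one_right hh.time_nonneg hu.2⟩

lemma eVariationOn_comp_mul_le (hh : IsLipschitzPath K x y ℓ h) :
    eVariationOn (h ∘ (ℓ * ·)) (Icc 0 1) ≤ ENNReal.ofReal ℓ :=
  calc eVariationOn (h ∘ (ℓ * ·)) (Icc 0 1) ≤ eVariationOn h (Icc 0 ℓ) :=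
        eVariationOn.comp_le_of_monotoneOn h _
          ((monotone_mul_left_of_nonneg hh.time_nonneg).monotoneOn _) hh.mapsTo_mul_Icc
    _ ≤ (1 : ℝ≥0) * ENNReal.ofReal (ℓ - 0) :=
        eVariationOn_Icc_le_of_lipschitzOnWith hh.lipschitzWith.lipschitzOnWith
    _ = ENNReal.ofReal ℓ := by rw [ENNReal.coe_one, one_mul, sub_zero]

end PseudoEMetricSpace

section EMetricSpace

variable {X : Type*} [EMetricSpace X] {K : Set X} {x y : X}

lemma exists_of_boundedVariationOn {γ : ℝ → X} {a b : ℝ} (hab : a ≤ b)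
    (hc : ContinuousOn γ (Icc a b)) (hγ : BoundedVariationOn γ (Icc a b)) :
    ∃ h, IsLipschitzPath (γ '' Icc a b) (γ a) (γ b) (eVariationOn γ (Icc a b)).toReal h := by
  set L := (eVariationOn γ (Icc a b)).toReal with hL
  set V := variationOnFromTo γ (Icc a b) a with hV
  set g := naturalParameterization γ (Icc a b) a
  have hL0 : 0 ≤ L := ENNReal.toReal_nonneg
  have ha : a ∈ Icc a b := left_mem_Icc.2 hab
  have hl := hγ.locallyBoundedVariationOn
  have hsurj : SurjOn V (Icc a b) (Icc 0 L) := surjOn_variationOnFromTo_Icc hab hγ hc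
  have hVa : V a = 0 := variationOnFromTo.self γ _ a
  have hVb : V b = L := by rw [hV, hL, variationOnFromTo.eq_of_le γ _ hab, inter_self]
  have hgV : ∀ t ∈ Icc a b, g (V t) = γ t := fun t ht =>
    edist_eq_zero.1 (edist_naturalParameterization_eq_zero hl ha ht)
  have hg : LipschitzOnWith 1 g (Icc 0 L) :=
    (lipschitzOnWith_of_hasConstantSpeedOnWith
      (has_unit_speed_naturalParameterization γ hl ha)).mono hsurj
  refine ⟨IccExtend hL0 ((Icc 0 L).domRestrict g), hL0, ?_, fun u => ?_, ?_, ?_⟩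
  · exact mul_one (1 : ℝ≥0) ▸ hg.to_restrict.comp (LipschitzWith.projIcc hL0)
  · obtain ⟨t, ht, hVt⟩ := hsurj (projIcc 0 L hL0 u).2
    exact ⟨t, ht, (hgV t ht).symm.trans (congrArg g hVt)⟩
  · rw [IccExtend_left, domRestrict_apply, ← hgV a ha, hVa]
  · rw [IccExtend_right, domRestrict_apply, ← hgV b (right_mem_Icc.2 hab), hVb]

lemma isCompact_setOf_time_le (hK : IsCompact K) (x y : X) (L : ℝ) :
    IsCompact {p : ℝ × (ℝ → X) | IsLipschitzPath K x y p.1 p.2 ∧ p.1 ≤ L} := by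
  have hcompact : IsCompact (Icc 0 L ×ˢ univ.pi fun _ : ℝ => K) :=
    isCompact_Icc.prod (isCompact_univ_pi fun _ => hK)
  have hclosed : IsClosed ({p : ℝ × (ℝ → X) | LipschitzWith 1 p.2 ∧ p.2 p.1 = y} ∩
      {p | p.2 0 = x}) :=
    (isClosed_setOf_lipschitzWith_and_apply_eq 1 y).inter
      (isClosed_eq ((continuous_apply 0).comp continuous_snd) continuous_const)
  convert hcompact.inter_right hclosed using 1
  ext p
  constructor
  · rintro ⟨⟨h0, hlip, hK, hx, hy⟩, hL⟩
    exact ⟨⟨⟨h0, hL⟩, fun u _ => hK u⟩, ⟨hlip, hy⟩, hx⟩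
  · rintro ⟨⟨⟨h0, hL⟩, hK⟩, ⟨hlip, hy⟩, hx⟩
    exact ⟨⟨h0, hlip, fun u => hK u trivial, hx, hy⟩, hL⟩

lemma exists_minimal_time (hK : IsCompact K) {L : ℝ} {g : ℝ → X} (hg : IsLipschitzPath K x y L g) :
    ∃ ℓ h, IsLipschitzPath K x y ℓ h ∧ ∀ ℓ' h', IsLipschitzPath K x y ℓ' h' → ℓ ≤ ℓ' := by
  obtain ⟨⟨ℓ, h⟩, ⟨hh, hℓL⟩, hmin⟩ := (isCompact_setOf_time_le hK x y L).exists_isMinOn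
    ⟨(L, g), hg, le_refl L⟩ continuous_fst.continuousOn
  refine ⟨ℓ, h, hh, fun ℓ' h' hh' => ?_⟩
  rcases le_total ℓ' L with hle | hge
  · exact isMinOn_iff.1 hmin (ℓ', h') ⟨hh', hle⟩
  · exact hℓL.trans hge

end EMetricSpace

end IsLipschitzPath

lemma exists_injOn_isCurveOn_eVariationOn_le {X : Type*} [EMetricSpace X] {x y : X} (hxy : x ≠ y)
    {γ : ℝ → X} (hγ : IsCurveOn γ x y) (hfin : eVariationOn γ (Icc 0 1) ≠ ⊤) :
    ∃ η : ℝ → X, IsCurveOn η x y ∧ InjOn η (Icc 0 1) ∧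
      eVariationOn η (Icc 0 1) ≤ eVariationOn γ (Icc 0 1) := by
  obtain ⟨hc, rfl, rfl⟩ := hγ
  have hK : IsCompact (γ '' Icc 0 1) := isCompact_Icc.image_of_continuousOn hc
  obtain ⟨g, hg⟩ := IsLipschitzPath.exists_of_boundedVariationOn zero_le_one hc hfin
  obtain ⟨ℓ, h, hh, hmin⟩ := IsLipschitzPath.exists_minimal_time hK hg
  have hℓ : ℓ ≠ 0 := by
    rintro rfl
    exact hxy (hh.map_zero.symm.trans hh.map_time)
  refine ⟨h ∘ (ℓ * ·), hh.isCurveOn_comp_mul, ?_, ?_⟩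
  · exact (hh.injOn_of_forall_le hmin).comp (mul_right_injective₀ hℓ).injOn hh.mapsTo_mul_Icc
  · exact hh.eVariationOn_comp_mul_le.trans (ENNReal.ofReal_le_of_le_toReal (hmin _ _ hg))

/-- The left-hand side is the length distance induced by the metric of `X`. -/
theorem dist_eq_sInf_arc_lengths_general {X : Type*} [EMetricSpace X] {x y : X} (hxy : x ≠ y) :
    sInf (curveLengths x y) = sInf {ℓ : ℝ≥0∞ | ∃ γ : ℝ → X, IsCurveOn γ x y ∧
      Set.InjOn γ (Set.Icc 0 1) ∧ eVariationOn γ (Set.Icc 0 1) = ℓ ∧ ℓ ≠ ⊤} := by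
  refine le_antisymm (sInf_le_sInf ?_) (le_sInf ?_)
  · rintro ℓ ⟨γ, hγ, -, hℓ, -⟩
    exact ⟨γ, hγ, hℓ⟩
  · rintro ℓ ⟨γ, hγ, rfl⟩
    rcases eq_or_ne (eVariationOn γ (Icc 0 1)) ⊤ with htop | hfin
    · rw [htop]
      exact le_top
    · obtain ⟨η, hη, hinj, hle⟩ := exists_injOn_isCurveOn_eVariationOn_le hxy hγ hfin
      exact sInf_le_of_le ⟨η, hη, hinj, rfl, ne_top_of_le_ne_top hfin hle⟩ hle

/-- In a length space, for distinct points `x, y`, the distance `d(x,y)` equals the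
infimum of lengths of rectifiable arcs (injective rectifiable curves) with endpoints
`x` and `y`. -/
theorem dist_eq_sInf_arc_lengths {X : Type*} [MetricSpace X] (hX : IsLengthSpace X)
    (x y : X) (hxy : x ≠ y) :
    edist x y = sInf {ℓ : ℝ≥0∞ | ∃ γ : ℝ → X, IsCurveOn γ x y ∧
      Set.InjOn γ (Set.Icc 0 1) ∧ eVariationOn γ (Set.Icc 0 1) = ℓ ∧ ℓ ≠ ⊤} :=
  (hX x y).trans (dist_eq_sInf_arc_lengths_general hxy)
end

section
/- Let X be a metric space, α:Sⁿ→X a continuous map, and x₀∈Sⁿ a point such that α is injective on a neighborhood of x₀ and α⁻¹(α(x₀))={x₀}. Then there exists a Lipschitz map π:X→ℝⁿ⁺¹ such that (π∘α)(Sⁿ)=Sⁿ⊂ℝⁿ⁺¹ and π∘α:Sⁿ→Sⁿ is homotopic to the identity map of Sⁿ. -/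
open Set Metric
open scoped NNReal

/-!
Interpolating, by a cutoff function, between a local left inverse of `α` near `α x₀` and the
constant `-x₀` gives a continuous `φ : X → ℝⁿ⁺¹` with `φ (α z)` on the segment from `-x₀` to `z` for
all `z`, and `φ (α x₀) = x₀`. Then `φ (α z)` is never a nonpositive multiple of `z`, so `φ ∘ α` may
be deformed to the inclusion within the nonzero vectors, and normalizing `φ` on the compact set
`α(Sⁿ)` gives a map to the sphere whose composition with `α` is homotopic to the identity. A
uniformly close Lipschitz map, which exists by the Stone–Weierstrass theorem, has the same homotopy
class once normalized, and it extends from `α(Sⁿ)` to a Lipschitz map on all of `X`.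

A self-map of the sphere homotopic to the identity is surjective: the homotopy, run along the
radius, extends it to a continuous map of the whole space that is the identity near infinity and
preserves norms, and a continuous map that is the identity near infinity is surjective. If it missed
the origin, smoothing and rescaling it would produce a `C¹` map `f` of constant norm that is the
identity on a sphere. Then `det Df = 0` everywhere, whereas the integral of `det Df` over the ball
is the volume of the ball.
-/

open Filter Function MeasureTheory NormedSpace Topology

section Degree

lemma bijective_sub_of_lipschitzWith {E : Type*} [NormedAddCommGroup E] [CompleteSpace E]
    {w : E → E} {K : ℝ≥0} (hw : LipschitzWith K w) (hK : K < 1) : Bijective fun x ↦ x - w x := by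
  refine (bijective_iff_existsUnique _).2 fun y ↦ ?_
  have hcontr : ContractingWith K fun x ↦ y + w x :=
    ⟨hK, by simpa using (LipschitzWith.const y).add hw⟩
  have hfix (x : E) : x - w x = y ↔ IsFixedPt (fun x ↦ y + w x) x := by
    rw [IsFixedPt, sub_eq_iff_eq_add, eq_comm]
  simp only [hfix]
  exact ⟨hcontr.fixedPoint, hcontr.fixedPoint_isFixedPt, fun x hx ↦ hcontr.fixedPoint_unique hx⟩

lemma inter_frontier_nonempty_of_isPreconnected {Y : Type*} [TopologicalSpace Y] {s t : Set Y}
    (ht : IsPreconnected t) (hin : (t ∩ s).Nonempty) (hout : (t ∩ sᶜ).Nonempty) :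
    (t ∩ frontier s).Nonempty := by
  by_contra! hempty
  have hfr (x : Y) (hx : x ∈ t) : x ∈ closure s → x ∈ interior s := fun hcl ↦ by
    by_contra hint
    exact (hempty.subset ⟨hx, hcl, hint⟩ : x ∈ (∅ : Set Y))
  obtain ⟨x, -, hxi, hxc⟩ := ht (interior s) (closure s)ᶜ isOpen_interior
    isClosed_closure.isOpen_compl
    (fun x hx ↦ (em (x ∈ closure s)).imp (hfr x hx) id)
    (hin.mono fun x hx ↦ ⟨hx.1, hfr x hx.1 (subset_closure hx.2)⟩)
    (hout.mono fun x hx ↦ ⟨hx.1, fun hcl ↦ hx.2 (interior_subset (hfr x hx.1 hcl))⟩)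
  exact hxc (interior_subset_closure hxi)

variable {E : Type*} [NormedAddCommGroup E] [NormedSpace ℝ E]

lemma lipschitzWith_indicator_of_eq_zero_on_frontier {F : Type*} [SeminormedAddCommGroup F]
    {s : Set E} (hs : IsClosed s) {f : E → F} {K : ℝ≥0} (hf : LipschitzOnWith K f s)
    (hf₀ : ∀ x ∈ frontier s, f x = 0) : LipschitzWith K (s.indicator f) := by
  have across {x y : E} (hx : x ∈ s) (hy : y ∉ s) : ‖f x‖ ≤ K * dist x y := by
    obtain ⟨z, hz, hzs⟩ := inter_frontier_nonempty_of_isPreconnected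
      (convex_segment x y).isPreconnected ⟨x, left_mem_segment ℝ x y, hx⟩
      ⟨y, right_mem_segment ℝ x y, hy⟩
    calc ‖f x‖ = dist (f x) (f z) := by rw [hf₀ z hzs, dist_zero_right]
      _ ≤ K * dist x z := hf.dist_le_mul x hx z (hs.frontier_subset hzs)
      _ ≤ K * dist x y := by
        gcongr
        linarith [dist_add_dist_of_mem_segment hz, dist_nonneg (x := z) (y := y)]
  refine .of_dist_le_mul fun x y ↦ ?_
  by_cases hx : x ∈ s <;> by_cases hy : y ∈ s
  · simpa only [indicator_of_mem, hx, hy] using hf.dist_le_mul x hx y hy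
  · simpa only [indicator_of_mem hx, indicator_of_notMem hy, dist_zero_right] using across hx hy
  · simpa only [indicator_of_notMem hx, indicator_of_mem hy, dist_zero_left, dist_comm x]
      using across hy hx
  · simp only [indicator_of_notMem, hx, hy, not_false_eq_true, dist_self]
    positivity

open Polynomial in
lemma exists_polynomial_eval_eq_integral {Ω : Type*} [MeasurableSpace Ω] {μ : Measure Ω}
    {P : Ω → ℝ[X]} {d : ℕ} (hdeg : ∀ x, (P x).degree < d)
    (hint : ∀ t, Integrable (fun x ↦ (P x).eval t) μ) :
    ∃ q : ℝ[X], ∀ t, q.eval t = ∫ x, (P x).eval t ∂μ := by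
  let node : ℕ → ℝ := (↑)
  have hnode : InjOn node (Finset.range d) := Nat.cast_injective.injOn
  refine ⟨Lagrange.interpolate (Finset.range d) node fun i ↦ ∫ x, (P x).eval (node i) ∂μ,
    fun t ↦ ?_⟩
  have hP (x : Ω) : (P x).eval t =
      ∑ i ∈ Finset.range d,
        (P x).eval (node i) * (Lagrange.basis (Finset.range d) node i).eval t := by
    conv_lhs => rw [Lagrange.eq_interpolate (f := P x) hnode (by simpa using hdeg x)]
    simp [Lagrange.interpolate_apply, eval_finsetSum]
  simp only [hP, Lagrange.interpolate_apply, eval_finsetSum, eval_mul, eval_C]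
  rw [integral_finsetSum _ fun i _ ↦ (hint _).mul_const _]
  simp only [integral_mul_const]

variable [FiniteDimensional ℝ E]

lemma det_one_sub_pos {A : E →L[ℝ] E} (hA : ‖A‖ < 1) : 0 < (1 - A).det := by
  have hne (B : E →L[ℝ] E) (hB : B ∈ ball 0 1) : (1 - B).det ≠ 0 := by
    have hunit : IsUnit (ContinuousLinearMap.toLinearMapRingHom (1 - B)) :=
      (isUnit_one_sub_of_norm_lt_one (mem_ball_zero_iff.1 hB)).map _
    exact (hunit.map LinearMap.det).ne_zero
  have hcont : ContinuousOn (fun B : E →L[ℝ] E ↦ (1 - B).det) (ball 0 1) :=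
    (ContinuousLinearMap.continuous_det.comp (by fun_prop)).continuousOn
  by_contra! hneg
  have h0 : (0 : ℝ) ≤ (1 - 0 : E →L[ℝ] E).det := by simp [ContinuousLinearMap.det]
  obtain ⟨B, hB, hB0⟩ := (convex_ball (0 : E →L[ℝ] E) 1).isPreconnected.intermediate_value
    (mem_ball_zero_iff.2 hA) (mem_ball_self one_pos) hcont ⟨hneg, h0⟩
  exact hne B hB hB0

variable [MeasurableSpace E] [BorelSpace E] (μ : Measure E) [μ.IsAddHaarMeasure]

lemma setIntegral_det_one_sub_fderiv {s : Set E} (hs : IsClosed s) (hconv : Convex ℝ s)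
    {u : E → E} (hu : Differentiable ℝ u) {K : ℝ≥0} (hK : K < 1)
    (hbound : ∀ x ∈ s, ‖fderiv ℝ u x‖₊ ≤ K) (hu₀ : ∀ x ∈ frontier s, u x = 0) :
    ∫ x in s, (1 - fderiv ℝ u x).det ∂μ = μ.real s := by
  have hlip : LipschitzWith K (s.indicator u) :=
    lipschitzWith_indicator_of_eq_zero_on_frontier hs
      (hconv.lipschitzOnWith_of_nnnorm_fderiv_le (fun x _ ↦ hu x) hbound) hu₀
  let F : E → E := fun x ↦ x - s.indicator u x
  have hF : Bijective F := bijective_sub_of_lipschitzWith hlip hK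
  have hFs : F '' s = s := by
    have hout : EqOn F id sᶜ := fun x hx ↦ by simp [F, indicator_of_notMem hx]
    rw [← compl_inj_iff, ← image_compl_eq hF, hout.image_eq, image_id]
  have hderiv (x : E) (hx : x ∈ s) : HasFDerivWithinAt F (1 - fderiv ℝ u x) s x := by
    have hin : EqOn F (fun x ↦ x - u x) s := fun x hx ↦ by simp [F, indicator_of_mem hx]
    exact ((hasFDerivAt_id x).sub (hu x).hasFDerivAt).hasFDerivWithinAt.congr hin (hin hx)
  have hpos (x : E) (hx : x ∈ s) : 0 < (1 - fderiv ℝ u x).det :=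
    det_one_sub_pos ((hbound x hx).trans_lt hK)
  calc ∫ x in s, (1 - fderiv ℝ u x).det ∂μ
      = ∫ x in s, |(1 - fderiv ℝ u x).det| • (1 : ℝ) ∂μ :=
        setIntegral_congr_fun hs.measurableSet fun x hx ↦ by simp [abs_of_pos (hpos x hx)]
    _ = ∫ _ in F '' s, (1 : ℝ) ∂μ :=
        (integral_image_eq_integral_abs_det_fderiv_smul μ hs.measurableSet hderiv
          hF.injective.injOn fun _ ↦ (1 : ℝ)).symm
    _ = μ.real s := by simp [hFs]

lemma setIntegral_det_smul_one_sub_fderiv {s : Set E} (hs : IsClosed s) (hconv : Convex ℝ s)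
    {u : E → E} (hu : Differentiable ℝ u) {K : ℝ≥0} (hbound : ∀ x ∈ s, ‖fderiv ℝ u x‖₊ ≤ K)
    (hu₀ : ∀ x ∈ frontier s, u x = 0) {t : ℝ≥0} (ht : K < t) :
    ∫ x in s, (t • 1 - fderiv ℝ u x).det ∂μ = t ^ Module.finrank ℝ E * μ.real s := by
  have ht₀ : t ≠ 0 := ht.bot_lt.ne'
  have hfderiv (x : E) : fderiv ℝ (t⁻¹ • u) x = t⁻¹ • fderiv ℝ u x :=
    fderiv_const_smul (hu x) t⁻¹
  have hdet (x : E) : (t • 1 - fderiv ℝ u x).det =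
      t ^ Module.finrank ℝ E * (1 - fderiv ℝ (t⁻¹ • u) x).det := by
    have hfactor : t • 1 - fderiv ℝ u x = (t : ℝ) • (1 - fderiv ℝ (t⁻¹ • u) x) := by
      rw [hfderiv, smul_sub]
      congr 1
      exact (smul_inv_smul₀ ht₀ _).symm
    rw [hfactor, ContinuousLinearMap.det, ContinuousLinearMap.toLinearMap_smul, LinearMap.det_smul,
      ContinuousLinearMap.det]
  simp only [hdet, integral_const_mul]
  rw [setIntegral_det_one_sub_fderiv μ hs hconv (hu.const_smul t⁻¹) (K := t⁻¹ * K)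
    ((inv_mul_lt_one₀ ht.bot_lt).2 ht) (fun x hx ↦ ?_) fun x hx ↦ by simp [hu₀ x hx]]
  rw [hfderiv, NNReal.smul_def, nnnorm_smul, NNReal.nnnorm_eq]
  gcongr
  exact hbound x hx

-- As a function of `t`, the integral over `s` of `det (t - Du)` with `u = id - f` is a polynomial.
-- It is `t ^ d * μ s` for large `t`, hence also at `t = 1`.
open Polynomial in
theorem setIntegral_det_fderiv_of_eq_id_on_frontier {s : Set E} (hs : IsCompact s)
    (hconv : Convex ℝ s) {f : E → E} (hf : ContDiff ℝ 1 f) (hid : ∀ x ∈ frontier s, f x = x) :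
    ∫ x in s, (fderiv ℝ f x).det ∂μ = μ.real s := by
  let u : E → E := fun x ↦ x - f x
  have hu : ContDiff ℝ 1 u := contDiff_id.sub hf
  have hu' : Continuous (fderiv ℝ u) := hu.continuous_fderiv one_ne_zero
  let P : E → ℝ[X] := fun x ↦ (fderiv ℝ u x : E →ₗ[ℝ] E).charpoly
  have hP (x : E) (t : ℝ) : (P x).eval t = (t • (1 : E →L[ℝ] E) - fderiv ℝ u x).det := by
    simp [P, LinearMap.eval_charpoly, ContinuousLinearMap.det, Algebra.algebraMap_eq_smul_one]
  have hdeg (x : E) : (P x).degree < (Module.finrank ℝ E + 1 : ℕ) := by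
    rw [← LinearMap.charpoly_natDegree (fderiv ℝ u x : E →ₗ[ℝ] E)]
    exact degree_le_natDegree.trans_lt (by exact_mod_cast Nat.lt_succ_self _)
  have hint (t : ℝ) : IntegrableOn (fun x ↦ (P x).eval t) s μ := by
    simp only [hP]
    exact (ContinuousLinearMap.continuous_det.comp
      (by fun_prop)).continuousOn.integrableOn_compact hs
  obtain ⟨q, hq⟩ := exists_polynomial_eval_eq_integral hdeg hint
  obtain ⟨K, hK⟩ := (hs.image hu'.nnnorm).bddAbove
  have hlarge (t : ℝ) (ht : K < t) : q.eval t = t ^ Module.finrank ℝ E * μ.real s := by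
    lift t to ℝ≥0 using K.2.trans ht.le
    simp only [hq, hP]
    exact setIntegral_det_smul_one_sub_fderiv μ hs.isClosed hconv (hu.differentiable one_ne_zero)
      (fun x hx ↦ hK (mem_image_of_mem _ hx)) (fun x hx ↦ by simp [u, hid x hx])
      (by exact_mod_cast ht)
  have hqX : q = C (μ.real s) * X ^ Module.finrank ℝ E :=
    eq_of_infinite_eval_eq _ _ ((Ioi_infinite (K : ℝ)).mono fun t ht ↦ by
      simpa [mul_comm (t ^ _)] using hlarge t ht)
  have hf' (x : E) : (fderiv ℝ f x).det = (P x).eval 1 := by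
    rw [hP, fderiv_fun_sub differentiableAt_fun_id (hf.differentiable one_ne_zero x), fderiv_fun_id]
    simp [ContinuousLinearMap.one_def]
  simp only [hf', ← hq, hqX]
  simp

end Degree

section Euclidean

variable {E : Type*} [NormedAddCommGroup E] [InnerProductSpace ℝ E] [FiniteDimensional ℝ E]

lemma det_fderiv_eq_zero_of_norm_eq {f : E → E} {r : ℝ} (hr : r ≠ 0) (hf : ∀ x, ‖f x‖ = r)
    {x : E} (hfx : DifferentiableAt ℝ f x) : (fderiv ℝ f x).det = 0 := by
  by_contra hdet
  have hnorm : HasFDerivAt (fun y ↦ ‖f y‖ ^ 2) (2 • innerSL ℝ (f x) ∘L fderiv ℝ f x) x :=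
    hfx.hasFDerivAt.norm_sq
  simp only [hf] at hnorm
  have horth (v : E) : inner ℝ (f x) (fderiv ℝ f x v) = 0 := by
    simpa using congr($(hnorm.unique (hasFDerivAt_const (r ^ 2) x)) v)
  obtain ⟨v, hv⟩ : ∃ v, fderiv ℝ f x v = f x :=
    (LinearMap.equivOfDetNeZero _ hdet).surjective (f x)
  have hfx₀ : f x = 0 := inner_self_eq_zero.1 (hv ▸ horth v)
  exact hr (by rw [← hf x, hfx₀, norm_zero])

lemma not_exists_contDiff_norm_eq {r : ℝ} (hr : 0 < r) :
    ¬ ∃ f : E → E, ContDiff ℝ 1 f ∧ (∀ x, ‖f x‖ = r) ∧ ∀ x, ‖x‖ = r → f x = x := by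
  rintro ⟨f, hf, hnorm, hid⟩
  borelize E
  have hvol : ∫ x in closedBall (0 : E) r, (fderiv ℝ f x).det =
      volume.real (closedBall (0 : E) r) :=
    setIntegral_det_fderiv_of_eq_id_on_frontier _ (isCompact_closedBall 0 r)
      (convex_closedBall 0 r) hf fun x hx ↦ hid x <| by
        simpa using frontier_closedBall_subset_sphere hx
  simp only [det_fderiv_eq_zero_of_norm_eq hr.ne' hnorm (hf.differentiable one_ne_zero _),
    integral_zero] at hvol
  exact (ENNReal.toReal_pos (measure_closedBall_pos _ _ hr).ne'
    measure_closedBall_lt_top.ne).ne hvol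

lemma exists_contDiff_norm_eq_of_ne_zero {F : E → E} (hF : Continuous F) (hF₀ : ∀ x, F x ≠ 0)
    {R r : ℝ} (hRr : R < r) (hr : 0 ≤ r) (hid : ∀ x, R < ‖x‖ → F x = x) :
    ∃ f : E → E, ContDiff ℝ 1 f ∧ (∀ x, ‖f x‖ = r) ∧ ∀ x, ‖x‖ = r → f x = x := by
  obtain ⟨h, hh, hnear, heq, -⟩ := hF.exists_contDiff_approx_and_eqOn 1 (ε := fun x ↦ ‖F x‖)
    hF.norm (fun x ↦ norm_pos_iff.2 (hF₀ x))
    (S := {x | r ≤ ‖x‖}) (U := {x | R < ‖x‖}) (isClosed_le continuous_const continuous_norm)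
    ((isOpen_lt continuous_const continuous_norm).mem_nhdsSet.2 fun x hx ↦ hRr.trans_le hx)
    (contDiffOn_id.congr hid)
  have hh₀ (x : E) : h x ≠ 0 := fun hx ↦ by simpa [hx] using hnear x
  refine ⟨fun x ↦ (r * ‖h x‖⁻¹) • h x,
    (contDiff_const.mul ((hh.norm ℝ hh₀).inv fun x ↦ norm_ne_zero_iff.2 (hh₀ x))).smul hh,
    fun x ↦ ?_, fun x hx ↦ ?_⟩
  · rw [norm_smul, norm_mul, norm_inv, norm_norm, Real.norm_of_nonneg hr,
      inv_mul_cancel_right₀ (norm_ne_zero_iff.2 (hh₀ x))]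
  · have hhx : h x = x := (heq hx.ge).trans (hid x (hRr.trans_eq hx.symm))
    have hx₀ : ‖x‖ ≠ 0 := norm_ne_zero_iff.2 (hhx ▸ hh₀ x)
    beta_reduce
    rw [hhx, ← hx, mul_inv_cancel₀ hx₀, one_smul]

lemma exists_eq_zero_of_eventuallyEq_cocompact_id {F : E → E} (hF : Continuous F)
    (hid : F =ᶠ[cocompact E] id) : ∃ x, F x = 0 := by
  by_contra! hF₀
  rw [← cobounded_eq_cocompact] at hid
  obtain ⟨R, -, hR⟩ := hasBasis_cobounded_norm.eventually_iff.1 hid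
  exact not_exists_contDiff_norm_eq (E := E) (zero_lt_one.trans_le (le_max_right (R + 1) 1))
    (exists_contDiff_norm_eq_of_ne_zero hF hF₀ (lt_max_of_lt_left (lt_add_one R)) (by positivity)
      fun x hx ↦ hR hx.le)

end Euclidean

section Sphere

variable {E : Type*} [NormedAddCommGroup E] [NormedSpace ℝ E]

theorem surjective_of_eventuallyEq_cocompact_id [FiniteDimensional ℝ E] {F : E → E}
    (hF : Continuous F) (hid : F =ᶠ[cocompact E] id) : Surjective F := by
  intro y
  let e : E ≃L[ℝ] EuclideanSpace ℝ (Fin (Module.finrank ℝ E)) := toEuclidean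
  let τ : EuclideanSpace ℝ (Fin (Module.finrank ℝ E)) ≃ₜ E :=
    e.symm.toHomeomorph.trans (Homeomorph.addRight y)
  have hG : τ.symm ∘ F ∘ τ =ᶠ[cocompact _] id := by
    have hτ : Tendsto τ (cocompact _) (cocompact E) := τ.map_cocompact.le
    filter_upwards [hτ.eventually hid] with z hz
    simp [hz]
  obtain ⟨z, hz⟩ := exists_eq_zero_of_eventuallyEq_cocompact_id (by fun_prop) hG
  refine ⟨τ z, ?_⟩
  have h0 : τ 0 = y := by simp [τ]
  rw [← h0, ← hz, comp_apply, comp_apply, τ.apply_symm_apply]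

/-- The radial projection `x ↦ x / ‖x‖` onto the unit sphere, as a continuous map on the nonzero
vectors. It turns maps avoiding the origin into maps to the sphere. -/
noncomputable def radialProjection : C({x : E // x ≠ 0}, sphere (0 : E) 1) where
  toFun x := ⟨normalize (x : E), by simpa using norm_normalize_eq_one_iff.2 x.2⟩
  continuous_toFun := by
    refine Continuous.subtype_mk ?_ _
    exact (continuous_subtype_val.norm.inv₀ fun x ↦ norm_ne_zero_iff.2 x.2).smul
      continuous_subtype_val

lemma norm_smul_radialProjection (x : {x : E // x ≠ 0}) :
    ‖(x : E)‖ • (radialProjection x : E) = x :=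
  norm_smul_normalize (x : E)

lemma radialProjection_coe_sphere (p : sphere (0 : E) 1) (hp : (p : E) ≠ 0) :
    radialProjection ⟨(p : E), hp⟩ = p :=
  Subtype.ext (normalize_eq_self_of_norm_eq_one (norm_eq_of_mem_sphere p))

open Classical in
/-- The self-map of `E` that preserves every sphere centred at the origin and acts on the sphere of
radius `r` by `Φ r`, after rescaling it to the unit sphere. It turns a homotopy of self-maps of the
sphere, parametrized by the radius, into a single self-map of `E`. -/
noncomputable def radialExtension (Φ : C(ℝ, C(sphere (0 : E) 1, sphere (0 : E) 1))) (x : E) : E :=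
  if hx : x = 0 then 0 else ‖x‖ • (Φ ‖x‖ (radialProjection ⟨x, hx⟩) : E)

section RadialExtension

variable (Φ : C(ℝ, C(sphere (0 : E) 1, sphere (0 : E) 1)))

lemma radialExtension_of_ne_zero {x : E} (hx : x ≠ 0) :
    radialExtension Φ x = ‖x‖ • (Φ ‖x‖ (radialProjection ⟨x, hx⟩) : E) :=
  dif_neg hx

lemma norm_radialExtension (x : E) : ‖radialExtension Φ x‖ = ‖x‖ := by
  obtain rfl | hx := eq_or_ne x 0
  · simp [radialExtension]
  · rw [radialExtension_of_ne_zero Φ hx, norm_smul, norm_norm, norm_eq_of_mem_sphere, mul_one]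

lemma continuous_radialExtension [FiniteDimensional ℝ E] : Continuous (radialExtension Φ) := by
  have hoff : ContinuousOn (radialExtension Φ) {x | x ≠ 0} := by
    have hΦ : Continuous fun x : {x : E // x ≠ 0} ↦ Φ ‖(x : E)‖ (radialProjection x) :=
      (Φ.continuous.comp continuous_subtype_val.norm).eval radialProjection.continuous
    rw [continuousOn_iff_continuous_domRestrict]
    exact (continuous_subtype_val.norm.smul (continuous_subtype_val.comp hΦ)).congr fun x ↦
      (radialExtension_of_ne_zero Φ x.2).symm
  rw [continuous_iff_continuousAt]
  intro x
  obtain rfl | hx := eq_or_ne x 0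
  · rw [ContinuousAt, radialExtension, dif_pos rfl, tendsto_zero_iff_norm_tendsto_zero]
    simpa only [norm_radialExtension] using tendsto_norm_zero
  · exact hoff.continuousAt (isOpen_ne.mem_nhds hx)

end RadialExtension

theorem surjective_of_homotopic_id [FiniteDimensional ℝ E]
    {g : C(sphere (0 : E) 1, sphere (0 : E) 1)} (hg : g.Homotopic (.id _)) : Surjective g := by
  obtain ⟨H⟩ := hg
  let Φ : C(ℝ, C(sphere (0 : E) 1, sphere (0 : E) 1)) := H.extend.comp ⟨(· - 1), by fun_prop⟩
  have hΦg : Φ 1 = g := by simp [Φ]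
  have hΦid (r : ℝ) (hr : 2 ≤ r) (p) : Φ r p = p :=
    H.extend_apply_of_one_le (le_sub_iff_add_le.2 (by linarith)) p
  have hid : radialExtension Φ =ᶠ[cocompact E] id := by
    filter_upwards [tendsto_norm_cocompact_atTop.eventually (eventually_ge_atTop 2)] with x hx
    have hx₀ : x ≠ 0 := norm_pos_iff.1 (two_pos.trans_le hx)
    rw [radialExtension_of_ne_zero Φ hx₀, hΦid _ hx]
    exact norm_smul_radialProjection ⟨x, hx₀⟩
  intro p
  obtain ⟨x, hx⟩ := surjective_of_eventuallyEq_cocompact_id (continuous_radialExtension Φ) hid p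
  have hx₁ : ‖x‖ = 1 := by rw [← norm_radialExtension Φ, hx, norm_eq_of_mem_sphere]
  have hx₀ : x ≠ 0 := norm_ne_zero_iff.1 (hx₁ ▸ one_ne_zero)
  refine ⟨radialProjection ⟨x, hx₀⟩, Subtype.ext ?_⟩
  rw [← hx, radialExtension_of_ne_zero Φ hx₀, hx₁, one_smul, hΦg]

lemma homotopic_radialProjection_comp {Y : Type*} [TopologicalSpace Y]
    {f : C(Y, {x : E // x ≠ 0})} {g : C(Y, sphere (0 : E) 1)}
    (hfg : ∀ y, (0 : E) ∉ segment ℝ (f y : E) (g y)) : (radialProjection.comp f).Homotopic g := by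
  let L := ContinuousMap.Homotopy.affine (ContinuousMap.comp ⟨_, continuous_subtype_val⟩ f)
    (ContinuousMap.comp ⟨_, continuous_subtype_val⟩ g)
  have hL (p) : L p ≠ 0 := fun hp ↦ hfg p.2 <| by
    rw [segment_eq_image_lineMap]
    exact ⟨p.1, p.1.2, hp⟩
  refine ⟨⟨radialProjection.comp ⟨fun p ↦ ⟨L p, hL p⟩, by fun_prop⟩, fun y ↦ ?_, fun y ↦ ?_⟩⟩
  · exact congrArg radialProjection (Subtype.ext (L.apply_zero y))
  · rw [← radialProjection_coe_sphere (g y) (ne_zero_of_mem_unit_sphere _)]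
    exact congrArg radialProjection (Subtype.ext (L.apply_one y))

end Sphere

section LipschitzApproximation

/-- The algebra of locally Lipschitz real-valued functions, to which the Stone–Weierstrass theorem
is applied: unlike the Lipschitz functions, they are closed under products on any metric space. -/
def locallyLipschitzSubalgebra (Y : Type*) [PseudoMetricSpace Y] : Subalgebra ℝ C(Y, ℝ) where
  carrier := {f | LocallyLipschitz f}
  mul_mem' hf hg := (contDiff_mul (𝕜 := ℝ)).locallyLipschitz.comp (LocallyLipschitz.prodMk hf hg)
  add_mem' hf hg := LocallyLipschitz.add hf hg
  algebraMap_mem' r := .const r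

lemma separatesPoints_locallyLipschitzSubalgebra (Y : Type*) [MetricSpace Y] :
    (locallyLipschitzSubalgebra Y).SeparatesPoints := fun x y hxy ↦
  ⟨_, ⟨⟨(dist · y), by fun_prop⟩, LipschitzWith.locallyLipschitz (.dist_left y), rfl⟩, by simpa⟩

variable {Y : Type*} [MetricSpace Y] [CompactSpace Y]

lemma exists_lipschitzWith_real_dist_lt (f : C(Y, ℝ)) {ε : ℝ} (hε : 0 < ε) :
    ∃ (K : ℝ≥0) (g : Y → ℝ), LipschitzWith K g ∧ ∀ y, dist (g y) (f y) < ε := by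
  obtain ⟨⟨g, hg⟩, hgf⟩ := ContinuousMap.exists_mem_subalgebra_near_continuousMap_of_separatesPoints
    _ (separatesPoints_locallyLipschitzSubalgebra Y) f ε hε
  obtain ⟨K, hK⟩ :=
    (LocallyLipschitz.locallyLipschitzOn hg).exists_lipschitzOnWith_of_compact isCompact_univ
  exact ⟨K, g, lipschitzOnWith_univ.1 hK, (ContinuousMap.dist_lt_iff hε).1 (by rwa [dist_eq_norm])⟩

variable {E : Type*} [NormedAddCommGroup E] [NormedSpace ℝ E]

lemma exists_lipschitzWith_dist_lt [FiniteDimensional ℝ E] (f : C(Y, E)) {ε : ℝ} (hε : 0 < ε) :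
    ∃ (K : ℝ≥0) (g : Y → E), LipschitzWith K g ∧ ∀ y, dist (g y) (f y) < ε := by
  let e := (Module.finBasis ℝ E).equivFun.toContinuousLinearEquiv
  obtain ⟨δ, hδ, hδε⟩ := uniformContinuous_iff.1 e.symm.lipschitz.uniformContinuous ε hε
  choose K g hg hgf using fun i ↦
    exists_lipschitzWith_real_dist_lt ⟨fun y ↦ e (f y) i, by fun_prop⟩ hδ
  have hpi : LipschitzWith (Finset.univ.sup K) fun y i ↦ g i y := fun x y ↦ by
    refine edist_pi_le_iff.2 fun i ↦ (hg i x y).trans ?_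
    gcongr
    exact Finset.le_sup (Finset.mem_univ i)
  refine ⟨_, _, e.symm.lipschitz.comp hpi, fun y ↦ ?_⟩
  rw [← e.symm_apply_apply (f y)]
  exact hδε ((dist_pi_lt_iff hδ).2 fun i ↦ hgf i y)

lemma lipschitzOnWith_normalize {c : ℝ≥0} (hc : 0 < c) :
    LipschitzOnWith (2 / c) (normalize : E → E) {x | c ≤ ‖x‖} := by
  refine .of_dist_le_mul fun x hx y _ ↦ ?_
  have hsplit : ‖x‖ • (normalize x - normalize y) = (x - y) + (‖y‖ - ‖x‖) • normalize y := by
    simp only [smul_sub, sub_smul, norm_smul_normalize]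
    abel
  have hnorm : ‖normalize y‖ ≤ 1 := by
    rw [NormedSpace.normalize, norm_smul, norm_inv, norm_norm]
    exact inv_mul_le_one
  have hscaled : c * dist (normalize x) (normalize y) ≤ 2 * dist x y := by
    calc c * dist (normalize x) (normalize y)
        ≤ ‖x‖ * ‖normalize x - normalize y‖ := by
          rw [dist_eq_norm]
          gcongr
          exact hx
      _ = ‖(x - y) + (‖y‖ - ‖x‖) • normalize y‖ := by rw [← hsplit, norm_smul, norm_norm]
      _ ≤ ‖x - y‖ + |‖y‖ - ‖x‖| * ‖normalize y‖ := by
          rw [← Real.norm_eq_abs, ← norm_smul]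
          exact norm_add_le _ _
      _ ≤ ‖x - y‖ + ‖y - x‖ * 1 := by
          gcongr
          exact abs_norm_sub_norm_le y x
      _ = 2 * dist x y := by rw [norm_sub_rev y x, dist_eq_norm]; ring
  rw [NNReal.coe_div, NNReal.coe_ofNat, div_mul_eq_mul_div, le_div_iff₀' (by exact_mod_cast hc)]
  exact hscaled

theorem exists_lipschitzWith_homotopic [FiniteDimensional ℝ E] (f : C(Y, sphere (0 : E) 1)) :
    ∃ (K : ℝ≥0) (g : C(Y, sphere (0 : E) 1)), LipschitzWith K g ∧ g.Homotopic f := by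
  obtain ⟨K, h, hK, hhf⟩ : ∃ (K : ℝ≥0) (h : Y → E), LipschitzWith K h ∧
      ∀ y, dist (h y) (f y) < 1 / 2 :=
    exists_lipschitzWith_dist_lt ⟨fun y ↦ (f y : E), by fun_prop⟩ one_half_pos
  have hseg (y) (x : E) (hx : x ∈ segment ℝ (h y) (f y)) : 1 / 2 ≤ ‖x‖ := by
    have hxf : dist x (f y) < 1 / 2 :=
      (convex_ball (f y : E) (1 / 2)).segment_subset (hhf y) (mem_ball_self one_half_pos) hx
    have hf : ‖(f y : E)‖ = 1 := norm_eq_of_mem_sphere (f y)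
    linarith [norm_sub_norm_le (f y : E) x, dist_eq_norm' x (f y : E)]
  have hh (y) : ((1 / 2 : ℝ≥0) : ℝ) ≤ ‖h y‖ := by
    simpa using hseg y _ (left_mem_segment ℝ _ _)
  have hh₀ (y) : h y ≠ 0 := norm_pos_iff.1 (one_half_pos.trans_le (hh y))
  refine ⟨2 / (1 / 2) * K, radialProjection.comp ⟨fun y ↦ ⟨h y, hh₀ y⟩, hK.continuous.subtype_mk _⟩,
    fun x y ↦ ?_, homotopic_radialProjection_comp fun y h0 ↦ ?_⟩
  · exact (lipschitzOnWith_normalize one_half_pos).comp hK.lipschitzOnWith (fun y _ ↦ hh y)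
      (mem_univ x) (mem_univ y)
  · simpa using (hseg y 0 h0).trans_lt' one_half_pos

lemma exists_lipschitzWith_extension {X : Type*} [PseudoMetricSpace X] [FiniteDimensional ℝ E]
    {s : Set X} {K : ℝ≥0} {f : s → E} (hf : LipschitzWith K f) :
    ∃ (K' : ℝ≥0) (g : X → E), LipschitzWith K' g ∧ ∀ x : s, g x = f x := by
  have hext (x : s) : extend Subtype.val f 0 x = f x := Subtype.val_injective.extend_apply f 0 x
  have hlip : LipschitzOnWith K (extend Subtype.val f 0) s := fun x hx y hy ↦ by
    rw [hext ⟨x, hx⟩, hext ⟨y, hy⟩]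
    exact hf ⟨x, hx⟩ ⟨y, hy⟩
  obtain ⟨g, hg, hgf⟩ := hlip.extend_finite_dimension
  exact ⟨_, g, hg, fun x ↦ (hgf x.2).symm.trans (hext x)⟩

end LipschitzApproximation

section Pinch

variable {S X E : Type*} [TopologicalSpace S] [CompactSpace S] [TopologicalSpace X] [T4Space X]
  [NormedAddCommGroup E] [NormedSpace ℝ E] [FiniteDimensional ℝ E] {α : S → X}

lemma exists_continuousMap_comp_eqOn_of_injOn (hα : Continuous α) {V : Set S} (hV : IsClosed V)
    (hinj : InjOn α V) (ι : C(S, E)) : ∃ ψ : C(X, E), EqOn (ψ ∘ α) ι V := by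
  have hemb : IsClosedEmbedding (V.domRestrict α) :=
    have := isCompact_iff_compactSpace.1 hV.isCompact
    (hα.comp continuous_subtype_val).isClosedEmbedding hinj.injective
  obtain ⟨ψ, hψ⟩ := (ι.restrict V).exists_extension hemb
  exact ⟨ψ, fun z hz ↦ congr($hψ ⟨z, hz⟩)⟩

lemma exists_continuousMap_comp_mem_segment [T2Space S] (hα : Continuous α) {x₀ : S}
    (hinj : ∃ U ∈ 𝓝 x₀, InjOn α U) (hpre : α ⁻¹' {α x₀} = {x₀}) (ι : C(S, E)) (c : E) :
    ∃ φ : C(X, E), φ (α x₀) = ι x₀ ∧ ∀ z, φ (α z) ∈ segment ℝ c (ι z) := by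
  obtain ⟨U, hU, hUinj⟩ := hinj
  obtain ⟨V, hV, hVclosed, hVU⟩ := exists_mem_nhds_isClosed_subset hU
  obtain ⟨ψ, hψ⟩ := exists_continuousMap_comp_eqOn_of_injOn hα hVclosed (hUinj.mono hVU) ι
  have hclosed : IsClosed (α '' (interior V)ᶜ) :=
    hα.isClosedMap _ isOpen_interior.isClosed_compl
  have hdisj : Disjoint (α '' (interior V)ᶜ) {α x₀} := by
    rw [disjoint_singleton_right]
    rintro ⟨z, hz, hzx⟩
    obtain rfl : z = x₀ := hpre.subset hzx
    exact hz (mem_interior_iff_mem_nhds.2 hV)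
  obtain ⟨χ, hχ₀, hχ₁, hχ⟩ :=
    exists_continuous_zero_one_of_isClosed hclosed isClosed_singleton hdisj
  refine ⟨⟨fun x ↦ AffineMap.lineMap c (ψ x) (χ x), by fun_prop⟩, ?_, fun z ↦ ?_⟩
  · have hχx₀ : χ (α x₀) = 1 := hχ₁ rfl
    have hψx₀ : ψ (α x₀) = ι x₀ := hψ (mem_of_mem_nhds hV)
    simp [hχx₀, hψx₀]
  · by_cases hz : z ∈ V
    · have hψz : ψ (α z) = ι z := hψ hz
      rw [segment_eq_image_lineMap, ← hψz]
      exact mem_image_of_mem _ (hχ (α z))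
    · have hχz : χ (α z) = 0 := hχ₀ (mem_image_of_mem α fun hzV ↦ hz (interior_subset hzV))
      simp [hχz, left_mem_segment]

end Pinch

section Main

variable {E : Type*} [NormedAddCommGroup E] [NormedSpace ℝ E]

lemma zero_notMem_segment_neg {a b : E} (hab : ‖a‖ = ‖b‖) (hne : a ≠ b) :
    (0 : E) ∉ segment ℝ (-a) b := by
  rw [mem_segment_iff_sameRay, zero_sub, sub_zero, neg_neg]
  exact fun h ↦ hne (h.eq_of_norm_eq hab)

variable [FiniteDimensional ℝ E] {X : Type*} {α : sphere (0 : E) 1 → X} {x₀ : sphere (0 : E) 1}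

lemma exists_continuousMap_zero_notMem_segment [TopologicalSpace X] [T4Space X]
    (hα : Continuous α) (hinj : ∃ U ∈ 𝓝 x₀, InjOn α U) (hpre : α ⁻¹' {α x₀} = {x₀}) :
    ∃ φ : C(X, E), ∀ z, (0 : E) ∉ segment ℝ (φ (α z)) z := by
  obtain ⟨φ, hφ₀, hφ⟩ := exists_continuousMap_comp_mem_segment hα hinj hpre
    ⟨((↑) : sphere (0 : E) 1 → E), continuous_subtype_val⟩ (-x₀)
  refine ⟨φ, fun z ↦ ?_⟩
  obtain rfl | hz := eq_or_ne z x₀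
  · rw [hφ₀, ContinuousMap.coe_mk, segment_same, mem_singleton_iff]
    exact (ne_zero_of_mem_unit_sphere z).symm
  · refine fun h0 ↦ zero_notMem_segment_neg (a := (x₀ : E)) (b := z) (by simp)
      (fun h ↦ hz (Subtype.ext h.symm)) ?_
    exact (convex_segment _ _).segment_subset (hφ z) (right_mem_segment ℝ _ _) h0

theorem exists_lipschitz_projection_sphere_general [MetricSpace X] (hα : Continuous α)
    (hinj : ∃ U ∈ 𝓝 x₀, InjOn α U) (hpre : α ⁻¹' {α x₀} = {x₀}) :
    ∃ (K : ℝ≥0) (π : X → E), LipschitzWith K π ∧ (∀ z, π (α z) ∈ sphere (0 : E) 1) ∧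
      ∃ g : C(sphere (0 : E) 1, sphere (0 : E) 1),
        (∀ z, (g z : E) = π (α z)) ∧ Surjective g ∧ g.Homotopic (.id _) := by
  obtain ⟨φ, hφ⟩ := exists_continuousMap_zero_notMem_segment hα hinj hpre
  let β : C(sphere (0 : E) 1, range α) := ⟨rangeFactorization α, hα.subtype_mk _⟩
  have hφ₀ : ∀ y : range α, φ y ≠ 0 := by
    rintro ⟨_, z, rfl⟩ (h0 : φ (α z) = 0)
    exact hφ z (by rw [h0]; exact left_mem_segment ℝ _ _)
  let f : C(range α, {x : E // x ≠ 0}) := ⟨fun y ↦ ⟨φ y, hφ₀ y⟩, by fun_prop⟩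
  have := isCompact_iff_compactSpace.1 (isCompact_range hα)
  obtain ⟨K, g, hK, hgf⟩ := exists_lipschitzWith_homotopic (radialProjection.comp f)
  have hid : (g.comp β).Homotopic (.id _) :=
    (hgf.comp (.refl β)).trans (homotopic_radialProjection_comp (f := f.comp β) hφ)
  obtain ⟨K', π, hπ, hπg⟩ := exists_lipschitzWith_extension (f := fun y ↦ (g y : E)) hK
  have hgπ (z) : (g.comp β z : E) = π (α z) := (hπg (β z)).symm
  exact ⟨K', π, hπ, fun z ↦ by rw [← hgπ]; exact (g.comp β z).2, g.comp β, hgπ,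
    surjective_of_homotopic_id hid, hid⟩

end Main

/-- Proposition on mapping spheres into metric spaces: if `α : Sⁿ → X` is continuous,
one-to-one near `x₀`, and `α⁻¹(α(x₀)) = {x₀}`, then there is a Lipschitz map
`π : X → ℝⁿ⁺¹` with `(π ∘ α)(Sⁿ) = Sⁿ` and `π ∘ α : Sⁿ → Sⁿ` homotopic to the identity. -/
theorem exists_lipschitz_projection_sphere {n : ℕ} {X : Type*} [MetricSpace X]
    (α : ↥(Metric.sphere (0 : EuclideanSpace ℝ (Fin (n + 1))) 1) → X)
    (hα : Continuous α)
    (x₀ : ↥(Metric.sphere (0 : EuclideanSpace ℝ (Fin (n + 1))) 1))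
    (hinj : ∃ U ∈ nhds x₀, Set.InjOn α U)
    (hpre : α ⁻¹' {α x₀} = {x₀}) :
    ∃ (K : ℝ≥0) (π : X → EuclideanSpace ℝ (Fin (n + 1))), LipschitzWith K π ∧
      (∀ z, π (α z) ∈ Metric.sphere (0 : EuclideanSpace ℝ (Fin (n + 1))) 1) ∧
      ∃ g : C(↥(Metric.sphere (0 : EuclideanSpace ℝ (Fin (n + 1))) 1),
             ↥(Metric.sphere (0 : EuclideanSpace ℝ (Fin (n + 1))) 1)),
        (∀ z, (g z : EuclideanSpace ℝ (Fin (n + 1))) = π (α z)) ∧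
        Function.Surjective g ∧
        g.Homotopic (ContinuousMap.id _) := by
  exact exists_lipschitz_projection_sphere_general hα hinj hpre
end

section
/- Let Ω⊂ℝⁿ be open and f:Ω→ℝᵐ, g:Ω→ℝᵏ locally Lipschitz. If there is a constant L>0 such that ℓ(g∘γ)≤L·ℓ(f∘γ) for every rectifiable curve γ:[a,b]→Ω, then for almost every x∈Ω one has |Dg(x)v|≤L|Df(x)v| for all unit vectors v∈Sⁿ⁻¹; in particular rank Dg(x) ≤ rank Df(x) for almost every x. -/
open Set Metric MeasureTheory
open scoped ENNReal NNReal

/-- `f` is locally Lipschitz on the open set `Ω`. -/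
def LocLipOn {E X : Type*} [NormedAddCommGroup E] [NormedSpace ℝ E] [PseudoMetricSpace X]
    (f : E → X) (Ω : Set E) : Prop :=
  ∀ x ∈ Ω, ∃ r > 0, Metric.ball x r ⊆ Ω ∧ ∃ K : ℝ≥0, LipschitzOnWith K f (Metric.ball x r)

/-- The rank of the derivative of `f` at `x`. -/
noncomputable def derivRank {E F : Type*} [NormedAddCommGroup E] [NormedSpace ℝ E]
    [NormedAddCommGroup F] [NormedSpace ℝ F] (f : E → F) (x : E) : ℕ :=
  Module.finrank ℝ (LinearMap.range ((fderiv ℝ f x) : E →ₗ[ℝ] F))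

/-!
Segments suffice as test curves. On a convex set where `f` is `K`-Lipschitz, the length bound makes
`g` `LK`-Lipschitz, so Rademacher's theorem applies to both maps. Along a line `γ`, the length of
`f ∘ γ` is at most `∫ |(f ∘ γ)'|`, hence `|g (γ s) - g (γ t)| ≤ L ∫ₜˢ |(f ∘ γ)'|`, and Lebesgue's
differentiation theorem yields `|(g ∘ γ)'| ≤ L |(f ∘ γ)'|` almost everywhere on the line. By Fubini
over the parallel lines, the derivative bound in a fixed direction holds at almost every point;
taking a countable dense set of directions gives it in all directions at once. The bound forces
`ker Df ⊆ ker Dg`, which is the inequality of ranks.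
-/

open Filter Topology

section Curves

variable {F G : Type*} [NormedAddCommGroup F] [NormedSpace ℝ F]
  [NormedAddCommGroup G] [NormedSpace ℝ G]

lemma eVariationOn_le_of_edist_le {α X Y : Type*} [LinearOrder α] [PseudoEMetricSpace X]
    [PseudoEMetricSpace Y] {φ : α → X} {ψ : α → Y} {s : Set α}
    (h : ∀ x ∈ s, ∀ y ∈ s, x ≤ y → edist (φ x) (φ y) ≤ edist (ψ x) (ψ y)) :
    eVariationOn φ s ≤ eVariationOn ψ s := by
  refine iSup_mono fun ⟨_, u, hu, hus⟩ => Finset.sum_le_sum fun i _ => ?_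
  simpa only [edist_comm] using h _ (hus i) _ (hus (i + 1)) (hu i.le_succ)

lemma eVariationOn_lineMap_le {V P : Type*} [SeminormedAddCommGroup V] [NormedSpace ℝ V]
    [PseudoMetricSpace P] [NormedAddTorsor V P] (p q : P) :
    eVariationOn (AffineMap.lineMap p q : ℝ → P) (Icc 0 1) ≤ edist p q := by
  simpa only [Function.comp_id, eVariationOn_id_Icc, sub_zero, ENNReal.ofReal_one, mul_one,
    edist_nndist] using
    (lipschitzWith_lineMap (𝕜 := ℝ) p q).lipschitzOnWith.comp_eVariationOn_le
      (mapsTo_univ (id : ℝ → ℝ) (Icc 0 1))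

lemma mapsTo_lineMap_of_segment_subset {E : Type*} [AddCommGroup E] [Module ℝ E] {p q : E}
    {s : Set E} (h : segment ℝ p q ⊆ s) : MapsTo (AffineMap.lineMap p q) (Icc (0 : ℝ) 1) s :=
  mapsTo_iff_image_subset.2 (segment_eq_image_lineMap ℝ p q ▸ h)

lemma eVariationOn_comp_lineMap {X : Type*} [PseudoEMetricSpace X] (φ : ℝ → X) {a b : ℝ}
    (hab : a ≤ b) :
    eVariationOn (φ ∘ AffineMap.lineMap a b) (Icc (0 : ℝ) 1) = eVariationOn φ (Icc a b) := by
  rw [eVariationOn.comp_eq_of_monotoneOn φ _ ((AffineMap.lineMap_mono hab).monotoneOn _),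
    ← segment_eq_image_lineMap, segment_eq_Icc hab]

lemma locallyIntegrable_norm_deriv_of_lipschitzWith [CompleteSpace F] {γ : ℝ → F} {K : ℝ≥0}
    (hγ : LipschitzWith K γ) : LocallyIntegrable (fun t => ‖deriv γ t‖) := by
  borelize F
  refine (memLp_top_of_bound (measurable_deriv γ).norm.aestronglyMeasurable K
    (.of_forall fun t => ?_)).locallyIntegrable le_top
  simpa only [norm_norm] using norm_deriv_le_of_lipschitz hγ

lemma intervalIntegrable_norm_deriv_of_lipschitzWith [CompleteSpace F] {γ : ℝ → F} {K : ℝ≥0}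
    (hγ : LipschitzWith K γ) (a b : ℝ) : IntervalIntegrable (fun t => ‖deriv γ t‖) volume a b :=
  intervalIntegrable_iff.mpr <|
    ((locallyIntegrable_norm_deriv_of_lipschitzWith hγ).integrableOn_isCompact
      isCompact_uIcc).mono_set uIoc_subset_uIcc

lemma norm_sub_le_integral_norm_deriv_of_lipschitzWith [FiniteDimensional ℝ F] {γ : ℝ → F}
    {K : ℝ≥0} (hγ : LipschitzWith K γ) {a b : ℝ} (hab : a ≤ b) :
    ‖γ b - γ a‖ ≤ ∫ t in a..b, ‖deriv γ t‖ := by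
  have : CompleteSpace F := FiniteDimensional.complete ℝ F
  obtain ⟨ℓ, hℓ, hℓ_norming⟩ := exists_dual_vector'' ℝ (γ b - γ a)
  have hℓγ : AbsolutelyContinuousOnInterval (ℓ ∘ γ) a b :=
    (ℓ.lipschitz.comp hγ).lipschitzOnWith.absolutelyContinuousOnInterval
  calc
    ‖γ b - γ a‖ = (ℓ ∘ γ) b - (ℓ ∘ γ) a := by simpa using hℓ_norming.symm
    _ = ∫ t in a..b, deriv (ℓ ∘ γ) t := hℓγ.integral_deriv_eq_sub.symm
    _ ≤ ∫ t in a..b, ‖deriv γ t‖ := by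
      refine intervalIntegral.integral_mono_ae hab hℓγ.intervalIntegrable_deriv
        (intervalIntegrable_norm_deriv_of_lipschitzWith hγ a b) ?_
      filter_upwards [hγ.ae_differentiableAt (μ := volume)] with t ht
      rw [(ℓ.hasFDerivAt.comp_hasDerivAt t ht.hasDerivAt).deriv]
      exact (Real.le_norm_self _).trans (ℓ.le_of_opNorm_le_of_le hℓ le_rfl |>.trans_eq (one_mul _))

lemma eVariationOn_Icc_le_integral_norm_deriv_of_lipschitzWith [FiniteDimensional ℝ F]
    {γ : ℝ → F} {K : ℝ≥0} (hγ : LipschitzWith K γ) {a b : ℝ} (hab : a ≤ b) :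
    eVariationOn γ (Icc a b) ≤ ENNReal.ofReal (∫ t in a..b, ‖deriv γ t‖) := by
  have : CompleteSpace F := FiniteDimensional.complete ℝ F
  have hint := intervalIntegrable_norm_deriv_of_lipschitzWith hγ
  let S : ℝ → ℝ := fun x => ∫ t in a..x, ‖deriv γ t‖
  have hS : ∀ x y, x ≤ y → ‖γ y - γ x‖ ≤ S y - S x := fun x y hxy =>
    (norm_sub_le_integral_norm_deriv_of_lipschitzWith hγ hxy).trans_eq
      (intervalIntegral.integral_interval_sub_left (hint a y) (hint a x)).symm
  have hS_mono : Monotone S := fun x y hxy => sub_nonneg.1 ((norm_nonneg _).trans (hS x y hxy))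
  calc
    eVariationOn γ (Icc a b) ≤ eVariationOn S (Icc a b) := by
      refine eVariationOn_le_of_edist_le fun x _ y _ hxy => ?_
      rw [edist_comm (γ x), edist_comm (S x), edist_dist, edist_dist, dist_eq_norm, dist_eq_norm]
      exact ENNReal.ofReal_le_ofReal ((hS x y hxy).trans (Real.le_norm_self _))
    _ = ENNReal.ofReal (S b - S a) := by
      simpa only [inter_self] using
        (hS_mono.monotoneOn (Icc a b)).eVariationOn_eq (left_mem_Icc.2 hab) (right_mem_Icc.2 hab)
    _ = ENNReal.ofReal (∫ t in a..b, ‖deriv γ t‖) := by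
      simp only [S, intervalIntegral.integral_same, sub_zero]

lemma norm_le_of_hasDerivAt_of_norm_sub_le {η : ℝ → G} {S : ℝ → ℝ} {η' : G} {S' t : ℝ}
    (hη : HasDerivAt η η' t) (hS : HasDerivAt S S' t)
    (h : ∀ᶠ s in 𝓝[>] t, ‖η s - η t‖ ≤ S s - S t) : ‖η'‖ ≤ S' := by
  have hη_slope := (hasDerivWithinAt_iff_tendsto_slope' (notMem_Ioi.2 le_rfl)).1
    (hη.hasDerivWithinAt (s := Ioi t))
  have hS_slope := (hasDerivWithinAt_iff_tendsto_slope' (notMem_Ioi.2 le_rfl)).1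
    (hS.hasDerivWithinAt (s := Ioi t))
  refine le_of_tendsto_of_tendsto hη_slope.norm hS_slope ?_
  filter_upwards [h, self_mem_nhdsWithin] with s hs hts
  have hts : 0 < (s - t)⁻¹ := inv_pos.2 (sub_pos.2 hts)
  rw [slope_def_module, slope_def_module, norm_smul, Real.norm_of_nonneg hts.le]
  exact mul_le_mul_of_nonneg_left hs hts.le

lemma lineDeriv_add_smul {𝕜 E W : Type*} [NontriviallyNormedField 𝕜] [AddCommGroup E] [Module 𝕜 E]
    [NormedAddCommGroup W] [NormedSpace 𝕜 W] (φ : E → W) (x v : E) (t : 𝕜) :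
    lineDeriv 𝕜 φ (x + t • v) v = deriv (fun s : 𝕜 => φ (x + s • v)) t := by
  simpa only [lineDeriv, add_smul, add_assoc, add_zero] using
    deriv_comp_const_add (fun s : 𝕜 => φ (x + s • v)) t 0

end Curves

/-- The hypothesis `ℓ(g ∘ γ) ≤ L · ℓ(f ∘ γ)` of the theorem, required only of the segments `γ`
contained in `s`, parameterized on `[0, 1]`. -/
def SegmentLengthBoundOn {E X Y : Type*} [AddCommGroup E] [Module ℝ E] [PseudoEMetricSpace X]
    [PseudoEMetricSpace Y] (L : ℝ≥0) (f : E → X) (g : E → Y) (s : Set E) : Prop :=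
  ∀ p q, segment ℝ p q ⊆ s →
    eVariationOn (g ∘ AffineMap.lineMap p q) (Icc (0 : ℝ) 1) ≤
      L * eVariationOn (f ∘ AffineMap.lineMap p q) (Icc (0 : ℝ) 1)

namespace SegmentLengthBoundOn

section Basic

variable {E X Y : Type*} [PseudoEMetricSpace X] [PseudoEMetricSpace Y] {L : ℝ≥0}

lemma mono [AddCommGroup E] [Module ℝ E] {f : E → X} {g : E → Y} {s t : Set E}
    (h : SegmentLengthBoundOn L f g t) (hst : s ⊆ t) : SegmentLengthBoundOn L f g s :=
  fun p q hpq => h p q (hpq.trans hst)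

lemma congr [AddCommGroup E] [Module ℝ E] {f f' : E → X} {g g' : E → Y} {s : Set E}
    (h : SegmentLengthBoundOn L f g s) (hf : EqOn f f' s) (hg : EqOn g g' s) :
    SegmentLengthBoundOn L f' g' s := by
  intro p q hpq
  have hmaps := mapsTo_lineMap_of_segment_subset hpq
  rw [← eVariationOn.congr (hf.comp_right hmaps), ← eVariationOn.congr (hg.comp_right hmaps)]
  exact h p q hpq

lemma comp_affineMap {E' : Type*} [AddCommGroup E] [Module ℝ E] [AddCommGroup E'] [Module ℝ E']
    {f : E → X} {g : E → Y} {s : Set E} (h : SegmentLengthBoundOn L f g s) (φ : E' →ᵃ[ℝ] E) :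
    SegmentLengthBoundOn L (f ∘ φ) (g ∘ φ) (φ ⁻¹' s) := by
  intro p q hpq
  have hφ : φ ∘ (AffineMap.lineMap p q : ℝ → E') = AffineMap.lineMap (φ p) (φ q) :=
    funext fun t => φ.apply_lineMap p q t
  simpa only [Function.comp_assoc, hφ] using
    h (φ p) (φ q) (image_segment ℝ φ p q ▸ image_subset_iff.2 hpq)

lemma eVariationOn_Icc_le {γ : ℝ → X} {η : ℝ → Y} {U : Set ℝ} (h : SegmentLengthBoundOn L γ η U)
    {a b : ℝ} (hab : a ≤ b) (hU : Icc a b ⊆ U) :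
    eVariationOn η (Icc a b) ≤ L * eVariationOn γ (Icc a b) := by
  simpa only [eVariationOn_comp_lineMap _ hab] using h a b (segment_eq_Icc hab ▸ hU)

lemma lipschitzOnWith [SeminormedAddCommGroup E] [NormedSpace ℝ E] {f : E → X} {g : E → Y}
    {s : Set E} {K : ℝ≥0} (h : SegmentLengthBoundOn L f g s) (hs : Convex ℝ s)
    (hf : LipschitzOnWith K f s) : LipschitzOnWith (L * K) g s := by
  intro p hp q hq
  have hpq : segment ℝ p q ⊆ s := hs.segment_subset hp hq
  have hmaps := mapsTo_lineMap_of_segment_subset hpq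
  calc
    edist (g p) (g q) ≤ eVariationOn (g ∘ AffineMap.lineMap p q) (Icc (0 : ℝ) 1) := by
      simpa using eVariationOn.edist_le (g ∘ AffineMap.lineMap p q)
        (left_mem_Icc.2 zero_le_one) (right_mem_Icc.2 (zero_le_one (α := ℝ)))
    _ ≤ L * eVariationOn (f ∘ AffineMap.lineMap p q) (Icc (0 : ℝ) 1) := h p q hpq
    _ ≤ L * (K * edist p q) := by
      gcongr
      exact (hf.comp_eVariationOn_le hmaps).trans (by gcongr; exact eVariationOn_lineMap_le p q)
    _ = ↑(L * K) * edist p q := by rw [ENNReal.coe_mul, mul_assoc]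

end Basic

variable {E F G : Type*} [NormedAddCommGroup E] [NormedSpace ℝ E]
  [NormedAddCommGroup F] [NormedSpace ℝ F] [FiniteDimensional ℝ F]
  [NormedAddCommGroup G] {L : ℝ≥0}

lemma norm_sub_le_integral {γ : ℝ → F} {η : ℝ → G} {U : Set ℝ} {K : ℝ≥0}
    (h : SegmentLengthBoundOn L γ η U) (hγ : LipschitzWith K γ) {a b : ℝ} (hab : a ≤ b)
    (hU : Icc a b ⊆ U) : ‖η b - η a‖ ≤ L * ∫ t in a..b, ‖deriv γ t‖ := by
  have hint : 0 ≤ ∫ t in a..b, ‖deriv γ t‖ :=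
    intervalIntegral.integral_nonneg hab fun _ _ => norm_nonneg _
  rw [← dist_eq_norm, ← ENNReal.ofReal_le_ofReal_iff (by positivity), ← edist_dist,
    ENNReal.ofReal_mul (NNReal.coe_nonneg L), ENNReal.ofReal_coe_nnreal]
  calc
    edist (η b) (η a) ≤ eVariationOn η (Icc a b) :=
      eVariationOn.edist_le η (right_mem_Icc.2 hab) (left_mem_Icc.2 hab)
    _ ≤ L * eVariationOn γ (Icc a b) := h.eVariationOn_Icc_le hab hU
    _ ≤ L * ENNReal.ofReal (∫ t in a..b, ‖deriv γ t‖) := by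
      gcongr
      exact eVariationOn_Icc_le_integral_norm_deriv_of_lipschitzWith hγ hab

variable [NormedSpace ℝ G]

lemma ae_norm_deriv_le {γ : ℝ → F} {η : ℝ → G} {U : Set ℝ} {K : ℝ≥0}
    (h : SegmentLengthBoundOn L γ η U) (hU : IsOpen U) (hγ : LipschitzWith K γ) :
    ∀ᵐ t, t ∈ U → ‖deriv η t‖ ≤ L * ‖deriv γ t‖ := by
  have : CompleteSpace F := FiniteDimensional.complete ℝ F
  filter_upwards [LocallyIntegrable.ae_hasDerivAt_integral
    (locallyIntegrable_norm_deriv_of_lipschitzWith hγ)] with t ht htU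
  by_cases hη : DifferentiableAt ℝ η t
  · refine norm_le_of_hasDerivAt_of_norm_sub_le hη.hasDerivAt ((ht t).const_mul (L : ℝ)) ?_
    obtain ⟨u, htu, hu⟩ := mem_nhdsGE_iff_exists_Icc_subset.1
      (mem_nhdsWithin_of_mem_nhds (hU.mem_nhds htU))
    filter_upwards [Ioc_mem_nhdsGT htu] with s hs
    simpa using h.norm_sub_le_integral hγ hs.1.le ((Icc_subset_Icc_right hs.2).trans hu)
  · rw [deriv_zero_of_not_differentiableAt hη, norm_zero]
    positivity

variable [FiniteDimensional ℝ E] [MeasurableSpace E] [BorelSpace E]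
  {μ : Measure E} [μ.IsAddHaarMeasure] {f : E → F} {g : E → G} {s : Set E} {K K' : ℝ≥0}

lemma ae_norm_lineDeriv_le [CompleteSpace G] (h : SegmentLengthBoundOn L f g s) (hs : IsOpen s)
    (hf : LipschitzWith K f) (hg : Continuous g) (v : E) :
    ∀ᵐ x ∂μ, x ∈ s → ‖lineDeriv ℝ g x v‖ ≤ L * ‖lineDeriv ℝ f x v‖ := by
  borelize F G
  have : CompleteSpace F := FiniteDimensional.complete ℝ F
  have hmeas : MeasurableSet {x | x ∈ s → ‖lineDeriv ℝ g x v‖ ≤ L * ‖lineDeriv ℝ f x v‖} :=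
    hs.measurableSet.imp <| measurableSet_le (measurable_lineDeriv hg).norm
      ((measurable_lineDeriv hf.continuous).norm.const_mul _)
  suffices hlines : ∀ p : E, ∀ᵐ t : ℝ, p + t • v ∈ s →
      ‖lineDeriv ℝ g (p + t • v) v‖ ≤ L * ‖lineDeriv ℝ f (p + t • v) v‖ from
    ae_mem_of_ae_add_linearMap_mem (LinearMap.toSpanSingleton ℝ E v) volume μ hmeas hlines
  intro p
  have hline : ⇑(AffineMap.lineMap p (p + v) : ℝ →ᵃ[ℝ] E) = fun t => p + t • v := funext fun t => by
    rw [AffineMap.lineMap_apply, vadd_eq_add, vsub_eq_sub, add_sub_cancel_left, add_comm]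
  have hline_lip := lipschitzWith_lineMap (𝕜 := ℝ) p (p + v)
  filter_upwards [(h.comp_affineMap (AffineMap.lineMap p (p + v))).ae_norm_deriv_le
    (hs.preimage hline_lip.continuous) (hf.comp hline_lip)] with t ht
  simpa only [hline, mem_preimage, Function.comp_def, lineDeriv_add_smul] using ht

lemma ae_norm_fderiv_le [FiniteDimensional ℝ G] (h : SegmentLengthBoundOn L f g s)
    (hs : IsOpen s) (hf : LipschitzWith K f) (hg : LipschitzWith K' g) :
    ∀ᵐ x ∂μ, x ∈ s → ∀ v, ‖fderiv ℝ g x v‖ ≤ L * ‖fderiv ℝ f x v‖ := by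
  have : CompleteSpace G := FiniteDimensional.complete ℝ G
  obtain ⟨D, hD_countable, hD_dense⟩ := TopologicalSpace.exists_countable_dense E
  filter_upwards [(ae_ball_iff hD_countable).2 fun v _ =>
      h.ae_norm_lineDeriv_le (μ := μ) hs hf hg.continuous v,
    hf.ae_differentiableAt, hg.ae_differentiableAt] with x hx hfx hgx hxs v
  have hclosed : IsClosed {v | ‖fderiv ℝ g x v‖ ≤ L * ‖fderiv ℝ f x v‖} :=
    isClosed_le (by fun_prop) (by fun_prop)
  refine hclosed.closure_subset_iff.2 (fun w hw => ?_) (hD_dense v)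
  simpa only [mem_ofPred_eq, hfx.lineDeriv_eq_fderiv, hgx.lineDeriv_eq_fderiv] using hx w hw hxs

lemma ae_differentiableAt_and_norm_fderiv_le [FiniteDimensional ℝ G]
    (h : SegmentLengthBoundOn L f g s) (hs : IsOpen s) (hs_convex : Convex ℝ s)
    (hf : LipschitzOnWith K f s) :
    ∀ᵐ x ∂μ, x ∈ s →
      DifferentiableAt ℝ g x ∧ ∀ v, ‖fderiv ℝ g x v‖ ≤ L * ‖fderiv ℝ f x v‖ := by
  obtain ⟨f', hf', hff'⟩ := hf.extend_finite_dimension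
  obtain ⟨g', hg', hgg'⟩ := (h.lipschitzOnWith hs_convex hf).extend_finite_dimension
  filter_upwards [(h.congr hff' hgg').ae_norm_fderiv_le (μ := μ) hs hf' hg',
    hg'.ae_differentiableAt] with x hx hg'x hxs
  have hfx : f =ᶠ[𝓝 x] f' := hff'.eventuallyEq_of_mem (hs.mem_nhds hxs)
  have hgx : g =ᶠ[𝓝 x] g' := hgg'.eventuallyEq_of_mem (hs.mem_nhds hxs)
  rw [hfx.fderiv_eq, hgx.fderiv_eq]
  exact ⟨hgx.differentiableAt_iff.2 hg'x, hx hxs⟩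

end SegmentLengthBoundOn

lemma ae_mem_imp_of_forall_mem_nhds {X : Type*} [TopologicalSpace X] [SecondCountableTopology X]
    [MeasurableSpace X] {μ : Measure X} {s : Set X} {P : X → Prop}
    (h : ∀ x ∈ s, ∃ u ∈ 𝓝 x, ∀ᵐ y ∂μ, y ∈ u → P y) : ∀ᵐ y ∂μ, y ∈ s → P y := by
  refine measure_null_of_locally_null _ fun x hx => ?_
  obtain ⟨u, hu, hP⟩ := h x (Classical.not_imp.1 hx).1
  refine ⟨_ ∩ u, inter_mem_nhdsWithin _ hu, measure_mono_null ?_ hP⟩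
  rintro y ⟨hy, hyu⟩ hPy
  exact hy fun _ => hPy hyu

lemma finrank_range_le_of_ker_le {K V W W' : Type*} [DivisionRing K] [AddCommGroup V] [Module K V]
    [AddCommGroup W] [Module K W] [AddCommGroup W'] [Module K W'] [FiniteDimensional K V]
    {A : V →ₗ[K] W} {B : V →ₗ[K] W'} (h : LinearMap.ker A ≤ LinearMap.ker B) :
    Module.finrank K (LinearMap.range B) ≤ Module.finrank K (LinearMap.range A) := by
  have hA := A.finrank_range_add_finrank_ker
  have hB := B.finrank_range_add_finrank_ker
  have hker := Submodule.finrank_mono h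
  lia

section DerivativeBound

variable {E F G : Type*} [NormedAddCommGroup E] [NormedSpace ℝ E] [FiniteDimensional ℝ E]
  [NormedAddCommGroup F] [NormedSpace ℝ F] [NormedAddCommGroup G] [NormedSpace ℝ G]
  {f : E → F} {g : E → G}

lemma derivRank_le_of_norm_fderiv_le {x : E} {L : ℝ}
    (h : ∀ v, ‖fderiv ℝ g x v‖ ≤ L * ‖fderiv ℝ f x v‖) : derivRank g x ≤ derivRank f x :=
  finrank_range_le_of_ker_le fun v (hv : fderiv ℝ f x v = 0) =>
    norm_le_zero_iff.1 <| by simpa [hv] using h v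

theorem ae_deriv_bound_of_curve_length_bound_general [FiniteDimensional ℝ F]
    [FiniteDimensional ℝ G] [MeasurableSpace E] [BorelSpace E] (μ : Measure E)
    [μ.IsAddHaarMeasure] {Ω : Set E} {L : ℝ≥0} (hf : LocLipOn f Ω)
    (hfg : SegmentLengthBoundOn L f g Ω) :
    ∀ᵐ x ∂μ, x ∈ Ω → DifferentiableAt ℝ g x ∧
      (∀ v, ‖fderiv ℝ g x v‖ ≤ L * ‖fderiv ℝ f x v‖) ∧ derivRank g x ≤ derivRank f x := by
  refine ae_mem_imp_of_forall_mem_nhds fun x hx => ?_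
  obtain ⟨r, hr, hrΩ, K, hK⟩ := hf x hx
  refine ⟨ball x r, ball_mem_nhds x hr, ?_⟩
  filter_upwards [(hfg.mono hrΩ).ae_differentiableAt_and_norm_fderiv_le (μ := μ) isOpen_ball
    (convex_ball x r) hK] with y hy hyr
  exact ⟨(hy hyr).1, (hy hyr).2, derivRank_le_of_norm_fderiv_le (hy hyr).2⟩

end DerivativeBound

/-- If `f, g` are locally Lipschitz on an open set `Ω ⊆ ℝⁿ` and
`ℓ(g∘γ) ≤ L·ℓ(f∘γ)` for every rectifiable curve `γ` in `Ω`, then for a.e. `x ∈ Ω`,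
`|Dg(x)v| ≤ L|Df(x)v|` for all unit vectors `v`, and hence
`rank Dg(x) ≤ rank Df(x)` a.e. in `Ω`. -/
theorem ae_deriv_bound_of_curve_length_bound {n m k : ℕ}
    (Ω : Set (EuclideanSpace ℝ (Fin n))) (hΩ : IsOpen Ω)
    (f : EuclideanSpace ℝ (Fin n) → EuclideanSpace ℝ (Fin m))
    (g : EuclideanSpace ℝ (Fin n) → EuclideanSpace ℝ (Fin k))
    (hf : LocLipOn f Ω) (hg : LocLipOn g Ω) (L : ℝ) (hL : 0 < L)
    (hcurve : ∀ γ : ℝ → EuclideanSpace ℝ (Fin n), ContinuousOn γ (Set.Icc 0 1) →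
      (∀ t ∈ Set.Icc (0:ℝ) 1, γ t ∈ Ω) → eVariationOn γ (Set.Icc 0 1) ≠ ⊤ →
      eVariationOn (g ∘ γ) (Set.Icc 0 1) ≤
        ENNReal.ofReal L * eVariationOn (f ∘ γ) (Set.Icc 0 1)) :
    ∀ᵐ x ∂(volume : Measure (EuclideanSpace ℝ (Fin n))), x ∈ Ω →
      (∀ v : EuclideanSpace ℝ (Fin n), ‖v‖ = 1 →
          ‖fderiv ℝ g x v‖ ≤ L * ‖fderiv ℝ f x v‖) ∧
        derivRank g x ≤ derivRank f x := by
  lift L to ℝ≥0 using hL.le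
  simp only [ENNReal.ofReal_coe_nnreal] at hcurve
  have hsegment : SegmentLengthBoundOn L f g Ω := fun p q hpq =>
    hcurve _ AffineMap.lineMap_continuous.continuousOn (mapsTo_lineMap_of_segment_subset hpq)
      (ne_top_of_le_ne_top (edist_ne_top p q) (eVariationOn_lineMap_le p q))
  filter_upwards [ae_deriv_bound_of_curve_length_bound_general volume hf hsegment] with x hx hxΩ
  exact ⟨fun v _ => (hx hxΩ).2.1 v, (hx hxΩ).2.2⟩
end
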